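/- Let V: ℝ^n → ℝ≥0 be a C² proper positive definite function with ∇V(0) = 0 and P := (1/2)·H(V)(0), let a: ℝ^n → ℝ^n be C¹ with a(0) = 0 and A := Da(0), let b: ℝ^n → ℝ^{n×p} be continuous with B := b(0), and let K ∈ ℝ^{p×n}. If (A + BK)ᵀP + P(A + BK) is negative definite, then there exists r₀ > 0 such that for all χ ∈ ℝ^n with 0 < V(χ) ≤ r₀, ∇V(χ)·(a(χ) + b(χ)Kχ) < 0. -/

import Mathlib

open Matrix Filter Topology Asymptotics

noncomputable section

/-- `V` is proper: `V χ → ∞` as `‖χ‖ → ∞`. -/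
def IsProper {E : Type*} [NormedAddCommGroup E] (V : E → ℝ) : Prop :=
  Filter.Tendsto V (Bornology.cobounded E) Filter.atTop

/-- `V` is positive definite: `V 0 = 0` and `V x > 0` for `x ≠ 0`. -/
def IsPosDefFn {E : Type*} [NormedAddCommGroup E] (V : E → ℝ) : Prop :=
  V 0 = 0 ∧ ∀ x : E, x ≠ 0 → 0 < V x

/-- The Hessian matrix of `V` at `x`. -/
def hessianAt {n : ℕ} (V : (Fin n → ℝ) → ℝ) (x : Fin n → ℝ) :
    Matrix (Fin n) (Fin n) ℝ :=
  Matrix.of fun i j => iteratedFDeriv ℝ 2 V x ![Pi.single i 1, Pi.single j 1]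

/-- A real square matrix is Hurwitz if all of its (complex) eigenvalues have
negative real part. -/
def Hurwitz {ι : Type*} [Fintype ι] [DecidableEq ι] (M : Matrix ι ι ℝ) : Prop :=
  ∀ μ : ℂ, μ ∈ spectrum ℂ (M.map (algebraMap ℝ ℂ)) → μ.re < 0

/-- Global asymptotic stability of the origin for `χ' = F (χ)`:
(i) Lyapunov stability of the origin, and (ii) for every initial condition there is a
solution defined on all of `[0, ∞)` converging to the origin (for a locally Lipschitz
vector field, by uniqueness of solutions, this is equivalent to requiring every maximal
solution to be defined on `[0,∞)` and to converge to the origin). -/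
def IsGAS {E : Type*} [NormedAddCommGroup E] [NormedSpace ℝ E] (F : E → E) : Prop :=
  (∀ ε > 0, ∃ δ > 0, ∀ (χ : ℝ → E) (T : ℝ),
      (∀ t ∈ Set.Ico (0:ℝ) T, HasDerivAt χ (F (χ t)) t) →
      ‖χ 0‖ ≤ δ → ∀ t ∈ Set.Ico (0:ℝ) T, ‖χ t‖ ≤ ε) ∧
  (∀ x₀ : E, ∃ χ : ℝ → E, χ 0 = x₀ ∧ (∀ t : ℝ, 0 ≤ t → HasDerivAt χ (F (χ t)) t) ∧
      Filter.Tendsto χ Filter.atTop (nhds 0))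


/-!
Since `V` is minimal at `0`, its gradient vanishes there, so `∇V(χ) = D²V(0) χ + o(‖χ‖)`. The closed
loop is `f(χ) = a(χ) + b(χ) K χ = (A + B K) χ + o(‖χ‖)`; continuity of `b` is enough here because
`b` multiplies a quantity vanishing at `0`. Hence `∇V(χ) · f(χ)` equals the quadratic form
`D²V(0)(χ, (A + B K) χ) = χᵀ ((A + B K)ᵀ P + P (A + B K)) χ` up to `o(‖χ‖²)`. By compactness of the
unit sphere this form is at most `-c ‖χ‖²` for some `c > 0`, so it dominates the error near `0`.
Finally, `V` is bounded below by a positive constant away from `0`, so small sublevel sets of `V`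
lie in any given neighbourhood of `0`.
-/

section Homogeneous

variable {E : Type*} [NormedAddCommGroup E] [NormedSpace ℝ E] [ProperSpace E] {q φ : E → ℝ} {k : ℕ}

lemma exists_mul_norm_pow_le_of_homogeneous (hq : Continuous q)
    (hhom : ∀ t : ℝ, 0 < t → ∀ x, q (t • x) = t ^ k * q x) (hpos : ∀ x ≠ 0, 0 < q x) :
    ∃ c > 0, ∀ x ≠ 0, c * ‖x‖ ^ k ≤ q x := by
  obtain ⟨c, hc, hle⟩ := (isCompact_sphere (0 : E) 1).exists_forall_le' hq.continuousOn
    fun x hx => hpos x (ne_zero_of_mem_unit_sphere ⟨x, hx⟩)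
  refine ⟨c, hc, fun x hx => ?_⟩
  have hnorm : 0 < ‖x‖ := norm_pos_iff.mpr hx
  calc c * ‖x‖ ^ k ≤ q (‖x‖⁻¹ • x) * ‖x‖ ^ k := by
        gcongr
        exact hle _ (by simp [norm_smul, hnorm.ne'])
    _ = q x := by rw [mul_comm, ← hhom _ hnorm, smul_inv_smul₀ hnorm.ne']

lemma eventually_pos_of_isLittleO_sub_homogeneous (hq : Continuous q)
    (hhom : ∀ t : ℝ, 0 < t → ∀ x, q (t • x) = t ^ k * q x) (hpos : ∀ x ≠ 0, 0 < q x)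
    (hφ : (fun x => φ x - q x) =o[𝓝 0] fun x => ‖x‖ ^ k) :
    ∀ᶠ x in 𝓝[≠] 0, 0 < φ x := by
  obtain ⟨c, hc, hle⟩ := exists_mul_norm_pow_le_of_homogeneous hq hhom hpos
  filter_upwards [(hφ.def (half_pos hc)).filter_mono nhdsWithin_le_nhds, self_mem_nhdsWithin]
    with x hclose hx
  have hnorm : 0 < ‖x‖ ^ k := pow_pos (norm_pos_iff.mpr hx) k
  rw [Real.norm_eq_abs, Real.norm_of_nonneg hnorm.le] at hclose
  linarith [hle x hx, (abs_le.mp hclose).1, mul_pos hc hnorm]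

end Homogeneous

section Linearization

variable {𝕜 E F G : Type*} [NontriviallyNormedField 𝕜] [NormedAddCommGroup E] [NormedSpace 𝕜 E]
  [NormedAddCommGroup F] [NormedSpace 𝕜 F] [NormedAddCommGroup G] [NormedSpace 𝕜 G]
  {c : E → F →L[𝕜] G} {u : E → F} {u' : E →L[𝕜] F} {x₀ : E}

lemma hasFDerivAt_clm_apply_of_continuousAt_of_eq_zero (hc : ContinuousAt c x₀)
    (hu : HasFDerivAt u u' x₀) (hu₀ : u x₀ = 0) :
    HasFDerivAt (fun x => c x (u x)) (c x₀ ∘L u') x₀ := by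
  have hc_sub : (fun x => c x - c x₀) =o[𝓝 x₀] fun _ => (1 : ℝ) :=
    (isLittleO_one_iff ℝ).mpr (tendsto_sub_nhds_zero_iff.mpr hc)
  have hu_isBigO : u =O[𝓝 x₀] fun x => x - x₀ := by simpa [hu₀] using hu.isBigO_sub
  have hrem : (fun x => (c x - c x₀) (u x)) =o[𝓝 x₀] fun x => x - x₀ := by
    refine isBoundedBilinearMap_apply.isBigO_comp.trans_isLittleO ?_
    simpa using hc_sub.norm_left.mul_isBigO hu_isBigO.norm_norm
  have hrem' : HasFDerivAt (fun x => (c x - c x₀) (u x)) (0 : E →L[𝕜] G) x₀ :=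
    .of_isLittleO (by simpa [hu₀] using hrem)
  simpa [Function.comp_def] using hrem'.fun_add ((c x₀).hasFDerivAt.comp x₀ hu)

lemma isLittleO_clm_apply_sub_of_eq_zero {c' : E →L[𝕜] F →L[𝕜] G} (hc : HasFDerivAt c c' x₀)
    (hc₀ : c x₀ = 0) (hu : HasFDerivAt u u' x₀) (hu₀ : u x₀ = 0) :
    (fun x => c x (u x) - c' (x - x₀) (u' (x - x₀))) =o[𝓝 x₀] fun x => ‖x - x₀‖ ^ 2 := by
  have hc_sub : (fun x => c x - c' (x - x₀)) =o[𝓝 x₀] fun x => x - x₀ := by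
    simpa [hc₀] using hc.isLittleO
  have hu_sub : (fun x => u x - u' (x - x₀)) =o[𝓝 x₀] fun x => x - x₀ := by
    simpa [hu₀] using hu.isLittleO
  have hu_isBigO : u =O[𝓝 x₀] fun x => x - x₀ := by simpa [hu₀] using hu.isBigO_sub
  have hleft : (fun x => (c x - c' (x - x₀)) (u x)) =o[𝓝 x₀] fun x => ‖x - x₀‖ * ‖x - x₀‖ :=
    isBoundedBilinearMap_apply.isBigO_comp.trans_isLittleO
      (hc_sub.norm_norm.mul_isBigO hu_isBigO.norm_norm)
  have hright : (fun x => c' (x - x₀) (u x - u' (x - x₀))) =o[𝓝 x₀]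
      fun x => ‖x - x₀‖ * ‖x - x₀‖ :=
    isBoundedBilinearMap_apply.isBigO_comp.trans_isLittleO
      ((c'.isBigO_sub (𝓝 x₀) x₀).norm_norm.mul_isLittleO hu_sub.norm_norm)
  refine (hleft.add hright).congr (fun x => ?_) fun x => (pow_two _).symm
  rw [_root_.sub_apply, map_sub (c' (x - x₀)), sub_add_sub_cancel]

end Linearization

section Lyapunov

variable {E : Type*} [NormedAddCommGroup E] {V : E → ℝ}

lemma exists_pos_forall_le_imp_mem_of_mem_nhds_zero [ProperSpace E] (hV : Continuous V)
    (hpos : ∀ x ≠ 0, 0 < V x) (hinf : ∃ m > 0, ∀ᶠ x in Bornology.cobounded E, m ≤ V x)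
    {s : Set E} (hs : s ∈ 𝓝 0) : ∃ r > 0, ∀ x, V x ≤ r → x ∈ s := by
  obtain ⟨m, hm, hfar⟩ := hinf
  obtain ⟨R, -, hR⟩ :=
    (Metric.hasBasis_cobounded_compl_closedBall (0 : E)).eventually_iff.mp hfar
  have hcompact : IsCompact (Metric.closedBall (0 : E) R \ interior s) :=
    (isCompact_closedBall 0 R).diff isOpen_interior
  obtain ⟨m', hm', hnear⟩ := hcompact.exists_forall_le' hV.continuousOn fun x hx =>
    hpos x fun h => hx.2 (h ▸ mem_interior_iff_mem_nhds.mpr hs)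
  obtain ⟨r, hr, hrlt⟩ := exists_between (lt_min hm hm')
  obtain ⟨hrm, hrm'⟩ := lt_min_iff.mp hrlt
  refine ⟨r, hr, fun x hx => interior_subset ?_⟩
  by_contra hxs
  by_cases hxR : x ∈ Metric.closedBall 0 R
  · exact (hx.trans_lt hrm').not_ge (hnear x ⟨hxR, hxs⟩)
  · exact (hx.trans_lt hrm).not_ge (hR hxR)

lemma IsPosDefFn.fderiv_zero [NormedSpace ℝ E] (hV : IsPosDefFn V) : fderiv ℝ V 0 = 0 := by
  refine IsLocalMin.fderiv_eq_zero (.of_forall fun x => ?_)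
  obtain rfl | hx := eq_or_ne x 0
  · rfl
  · exact hV.1.trans_le (hV.2 x hx).le

lemma IsPosDefFn.eventually_fderiv_apply_neg [NormedSpace ℝ E] [ProperSpace E]
    (hV : IsPosDefFn V) {V'' : E →L[ℝ] E →L[ℝ] ℝ} (hV'' : HasFDerivAt (fderiv ℝ V) V'' 0)
    {f : E → E} {f' : E →L[ℝ] E} (hf : HasFDerivAt f f' 0) (hf₀ : f 0 = 0)
    (hneg : ∀ x ≠ 0, V'' x (f' x) < 0) : ∀ᶠ x in 𝓝[≠] 0, fderiv ℝ V x (f x) < 0 := by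
  have hlin : (fun x => fderiv ℝ V x (f x) - V'' x (f' x)) =o[𝓝 0] fun x => ‖x‖ ^ 2 := by
    simpa using isLittleO_clm_apply_sub_of_eq_zero hV'' hV.fderiv_zero hf hf₀
  have hpos : ∀ᶠ x in 𝓝[≠] 0, 0 < -fderiv ℝ V x (f x) :=
    eventually_pos_of_isLittleO_sub_homogeneous (q := fun x => -V'' x (f' x)) (by fun_prop)
      (fun t _ x => by simp only [map_smul, FunLike.coe_smul, Pi.smul_apply, smul_eq_mul]; ring)
      (fun x hx => neg_pos.mpr (hneg x hx)) (hlin.neg_left.congr_left fun x => by ring)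
  exact hpos.mono fun x => neg_pos.mp

end Lyapunov

section Hessian

variable {n : ℕ} {V : (Fin n → ℝ) → ℝ} {x : Fin n → ℝ}

lemma dotProduct_hessianAt_mulVec (v w : Fin n → ℝ) :
    v ⬝ᵥ hessianAt V x *ᵥ w = fderiv ℝ (fderiv ℝ V) x v w := by
  conv_rhs => rw [pi_eq_sum_univ' v, pi_eq_sum_univ' w]
  simp only [map_sum, map_smul, FunLike.coe_sum, Finset.sum_apply, FunLike.coe_smul,
    Pi.smul_apply, dotProduct, mulVec, hessianAt, iteratedFDeriv_two_apply, smul_eq_mul,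
    Finset.mul_sum, of_apply, cons_val_zero, cons_val_one]
  rw [Finset.sum_comm]
  refine Finset.sum_congr rfl fun i _ => Finset.sum_congr rfl fun j _ => ?_
  ring

lemma hessianAt_isSymm (hV : ContDiffAt ℝ 2 V x) : (hessianAt V x).IsSymm :=
  IsSymm.ext fun i j => by
    simpa [hessianAt, iteratedFDeriv_two_apply] using
      (hV.isSymmSndFDerivAt (by simp)).eq (Pi.single j 1) (Pi.single i 1)

lemma dotProduct_lyapunov_mulVec {ι R : Type*} [Fintype ι] [CommRing R] {P : Matrix ι ι R}
    (hP : P.IsSymm) (M : Matrix ι ι R) (v : ι → R) :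
    v ⬝ᵥ (Mᵀ * P + P * M) *ᵥ v = 2 * (v ⬝ᵥ P *ᵥ (M *ᵥ v)) := by
  have htranspose : v ⬝ᵥ (Mᵀ * P) *ᵥ v = v ⬝ᵥ (P * M) *ᵥ v := by
    rw [dotProduct_mulVec, ← mulVec_transpose, transpose_mul, transpose_transpose, hP.eq,
      dotProduct_comm]
  rw [add_mulVec, dotProduct_add, htranspose, ← mulVec_mulVec, two_mul]

lemma fderiv_fderiv_apply_mulVec_neg_of_lyapunov (hV : ContDiffAt ℝ 2 V x)
    {M : Matrix (Fin n) (Fin n) ℝ}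
    (hM : (-(Mᵀ * ((1 / 2 : ℝ) • hessianAt V x) + ((1 / 2 : ℝ) • hessianAt V x) * M)).PosDef)
    {v : Fin n → ℝ} (hv : v ≠ 0) : fderiv ℝ (fderiv ℝ V) x v (M *ᵥ v) < 0 := by
  have hpos := hM.dotProduct_mulVec_pos hv
  rw [star_trivial, neg_mulVec, dotProduct_neg, neg_pos,
    dotProduct_lyapunov_mulVec ((hessianAt_isSymm hV).smul _), smul_mulVec, dotProduct_smul,
    dotProduct_hessianAt_mulVec, smul_eq_mul] at hpos
  linarith

end Hessian

lemma continuous_toContinuousLinearMap_mulVecLin_of {X m n : Type*} [TopologicalSpace X]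
    [Finite m] [Fintype n] {b : X → m → n → ℝ} (hb : Continuous b) :
    Continuous fun x => LinearMap.toContinuousLinearMap (of (b x)).mulVecLin := by
  have := Fintype.ofFinite m
  refine continuous_clm_apply.mpr fun v => ?_
  exact Continuous.matrix_mulVec hb continuous_const

theorem stmt6_general {E U : Type*} [NormedAddCommGroup E] [NormedSpace ℝ E]
    [FiniteDimensional ℝ E] [NormedAddCommGroup U] [NormedSpace ℝ U]
    {V : E → ℝ} (hV : Continuous V) (hVpos : IsPosDefFn V)
    (hVinf : ∃ m > 0, ∀ᶠ x in Bornology.cobounded E, m ≤ V x)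
    {V'' : E →L[ℝ] E →L[ℝ] ℝ} (hV'' : HasFDerivAt (fderiv ℝ V) V'' 0)
    {a : E → E} {A : E →L[ℝ] E} (ha : HasFDerivAt a A 0) (ha₀ : a 0 = 0)
    {b : E → U →L[ℝ] E} (hb : ContinuousAt b 0) {K : E →L[ℝ] U}
    (hneg : ∀ x ≠ 0, V'' x (A x + b 0 (K x)) < 0) :
    ∃ r₀ > (0 : ℝ), ∀ x, 0 < V x → V x ≤ r₀ → fderiv ℝ V x (a x + b x (K x)) < 0 := by
  have hloop : HasFDerivAt (fun x => a x + b x (K x)) (A + b 0 ∘L K) 0 :=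
    ha.add (hasFDerivAt_clm_apply_of_continuousAt_of_eq_zero hb K.hasFDerivAt (map_zero K))
  have hdecrease : ∀ᶠ x in 𝓝[≠] 0, fderiv ℝ V x (a x + b x (K x)) < 0 :=
    hVpos.eventually_fderiv_apply_neg hV'' hloop (by simp [ha₀]) hneg
  obtain ⟨r₀, hr₀, hsublevel⟩ := exists_pos_forall_le_imp_mem_of_mem_nhds_zero hV hVpos.2 hVinf
    (eventually_nhdsWithin_iff.mp hdecrease)
  refine ⟨r₀, hr₀, fun x hx hxr => hsublevel x hxr ?_⟩
  rintro rfl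
  exact hx.ne' hVpos.1

/-- If `V` is `C²` proper positive definite with `∇V(0) = 0`,
`P := ½ H(V)(0)`, and `(A+BK)ᵀP + P(A+BK)` is negative definite, then on a small
sublevel set `{0 < V ≤ r₀}` the linear feedback `u = Kχ` makes `V` strictly decrease. -/
theorem stmt6 {n p : ℕ}
    (V : (Fin n → ℝ) → ℝ)
    (hV : ContDiff ℝ 2 V) (hVnonneg : ∀ χ, 0 ≤ V χ)
    (hVproper : IsProper V) (hVpos : IsPosDefFn V)
    (hgrad0 : fderiv ℝ V 0 = 0)
    (a : (Fin n → ℝ) → (Fin n → ℝ)) (b : (Fin n → ℝ) → Fin n → Fin p → ℝ)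
    (A : Matrix (Fin n) (Fin n) ℝ) (B : Matrix (Fin n) (Fin p) ℝ)
    (K : Matrix (Fin p) (Fin n) ℝ)
    (ha : ContDiff ℝ 1 a) (ha0 : a 0 = 0)
    (hA : ∀ v, fderiv ℝ a 0 v = A.mulVec v)
    (hb : Continuous b) (hB : B = Matrix.of (b 0))
    (hLyap : (-((A + B * K)ᵀ * (((1:ℝ)/2) • hessianAt V 0)
        + (((1:ℝ)/2) • hessianAt V 0) * (A + B * K))).PosDef) :
    ∃ r₀ > (0:ℝ), ∀ χ : Fin n → ℝ, 0 < V χ → V χ ≤ r₀ →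
      fderiv ℝ V χ (a χ + (Matrix.of (b χ)).mulVec (K.mulVec χ)) < 0 := by
  exact stmt6_general hV.continuous hVpos ⟨1, one_pos, hVproper.eventually_ge_atTop 1⟩
    ((hV.fderiv_right (m := 1) le_rfl).differentiable_one 0).hasFDerivAt
    (ha.differentiable_one 0).hasFDerivAt ha0
    (continuous_toContinuousLinearMap_mulVecLin_of hb).continuousAt
    (K := LinearMap.toContinuousLinearMap K.mulVecLin) fun x hx => by
      simpa [hA, hB, add_mulVec] using
        fderiv_fderiv_apply_mulVec_neg_of_lyapunov hV.contDiffAt hLyap hx
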